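/- Let p be a prime, let G be a finite group of order divisible by p, and let S be a Sylow p-subgroup of G. Assume that Ω1(S) ≤ Z(S) and that N_G(S) controls p-fusion in G. Then for every nontrivial subgroup Q of Ω1(S) one has C_G(Q) = (N_G(S) ∩ C_G(Q))·(S·C_G(Q)'), and consequently C_G(Q)/(S·C_G(Q)') is isomorphic to (N_G(S) ∩ C_G(Q))/(N_G(S) ∩ S·C_G(Q)'). -/

import Mathlib

open Subgroup Pointwise
open scoped commutatorElement

/-- `Ω₁(S)`: the subgroup generated by the elements of `S` of order dividing `p`. -/
def omega1 {G : Type*} [Group G] (p : ℕ) (S : Subgroup G) : Subgroup G :=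
  Subgroup.closure {g : G | g ∈ S ∧ g ^ p = 1}

/-- `H` controls `p`-fusion in `G` with respect to the Sylow `p`-subgroup `S`. -/
def ControlsPFusion {G : Type*} [Group G] (S H : Subgroup G) : Prop :=
  ∀ Q : Subgroup G, Q ≤ S → ∀ g : G, (∀ q ∈ Q, g * q * g⁻¹ ∈ S) →
    ∃ h ∈ H, ∃ c ∈ Subgroup.centralizer (Q : Set G), g = h * c

/-- A subgroup whose intersection with `H` contains the derived subgroup of `H`
intersects `H` in a normal subgroup of `H`. -/
theorem normal_subgroupOf_of_commutator_le {G : Type*} [Group G] {H K : Subgroup G}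
    (h : ⁅H, H⁆ ≤ K) : (K.subgroupOf H).Normal := by
  constructor
  rintro ⟨x, hxH⟩ hx ⟨g, hgH⟩
  rw [Subgroup.mem_subgroupOf] at hx ⊢
  show g * x * g⁻¹ ∈ K
  have e : g * x * g⁻¹ = ⁅g, x⁆ * x := by
    rw [commutatorElement_def]; group
  rw [e]
  exact K.mul_mem (h (Subgroup.commutator_mem_commutator hgH hxH)) hx

instance subgroupOf_sup_commutator_normal {G : Type*} [Group G] (A B : Subgroup G) :
    ((A ⊔ ⁅B, B⁆).subgroupOf B).Normal :=
  normal_subgroupOf_of_commutator_le le_sup_right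

instance subgroupOf_inf_sup_commutator_normal {G : Type*} [Group G] (N A B : Subgroup G) :
    ((N ⊓ (A ⊔ ⁅B, B⁆)).subgroupOf (N ⊓ B)).Normal := by
  refine normal_subgroupOf_of_commutator_le (le_inf ?_ ?_)
  · refine (Subgroup.commutator_le.mpr fun g hg x hx => ?_)
    rw [commutatorElement_def]
    exact N.mul_mem (N.mul_mem (N.mul_mem hg.1 hx.1) (N.inv_mem hg.1)) (N.inv_mem hx.1)
  · exact (Subgroup.commutator_mono inf_le_right inf_le_right).trans le_sup_right

/-! Since `Q` is central in `S`, the group `C = C_G(Q)` contains `S`. Its normal subgroup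
`K = S C'` then has `S` as a Sylow subgroup, so every conjugate of `S` under `C` is already a
conjugate under `K`: this is the Frattini argument, and it gives `C = N_C(S) K`. The second
isomorphism theorem turns this factorization into the isomorphism of quotients. -/

section

variable {G : Type*} [Group G] {N H K C : Subgroup G}

theorem coe_mul_eq_coe_sup_of_normal_subgroupOf [(K.subgroupOf C).Normal] (hHC : H ≤ C)
    (hKC : K ≤ C) : (H : Set G) * (K : Set G) = (H ⊔ K : Subgroup G) :=
  (coe_mul_of_left_le_normalizer_right H K
    (hHC.trans (le_normalizer_of_normal_subgroupOf hKC))).symm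

theorem normalizer_inf_sup_eq_of_sylow_le {p : ℕ} [Fact p.Prime] [Finite (Sylow p C)]
    [(K.subgroupOf C).Normal] (S : Sylow p G) (hSK : S ≤ K) (hKC : K ≤ C) :
    normalizer (S : Set G) ⊓ C ⊔ K = C := by
  have hSC : S ≤ C := hSK.trans hKC
  have frattini : (normalizer (S : Set G)).subgroupOf C ⊔ K.subgroupOf C = ⊤ := by
    have h := (S.subtype hSC).normalizer_sup_eq_top' (subgroupOf_mono C hSK)
    rwa [← Sylow.coe_coe, Sylow.coe_subtype, ← subgroupOf_normalizer_eq hSC] at h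
  have h := congrArg (map C.subtype) frattini
  rwa [Subgroup.map_sup, subgroupOf_map_subtype, subgroupOf_map_subtype, inf_of_le_left hKC,
    ← MonoidHom.range_eq_map, range_subtype] at h

/-- The isomorphism `C / K ≃ H / (H ∩ K)` of the second isomorphism theorem, for a factorization
`C = H K` modulo a normal subgroup `K` of `C`. The subgroup `L` of `H` stands for `H ∩ K`, which may
thus be given in any form. -/
noncomputable def quotientEquivOfSupEq [(K.subgroupOf C).Normal] {L : Subgroup H} [L.Normal]
    (hC : H ⊔ K = C) (hL : K.subgroupOf H = L) : C ⧸ K.subgroupOf C ≃* H ⧸ L := by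
  subst hC hL
  have hHK : H ≤ normalizer K :=
    le_sup_left.trans (le_normalizer_of_normal_subgroupOf (K := H ⊔ K) le_sup_right)
  exact (QuotientGroup.quotientInfEquivProdNormalizerQuotient H K hHK).symm

theorem subgroupOf_inf_eq_inf_subgroupOf_inf :
    K.subgroupOf (N ⊓ C) = (N ⊓ K).subgroupOf (N ⊓ C) := by
  rw [subgroupOf_inj]
  order

end

theorem stmt18_general {G : Type*} [Group G] {p : ℕ} [Fact p.Prime] (S : Sylow p G)
    (C : Subgroup G) [Finite (Sylow p C)] (hSC : S ≤ C) :
    ((normalizer (S : Set G) ⊓ C : Subgroup G) : Set G) *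
        ((S : Set G) * ((⁅C, C⁆ : Subgroup G) : Set G)) = C ∧
      Nonempty
        (C ⧸ ((S : Subgroup G) ⊔ ⁅C, C⁆).subgroupOf C ≃*
          (normalizer (S : Set G) ⊓ C : Subgroup G) ⧸
            (normalizer (S : Set G) ⊓ ((S : Subgroup G) ⊔ ⁅C, C⁆)).subgroupOf
              (normalizer (S : Set G) ⊓ C)) := by
  have hKC : (S : Subgroup G) ⊔ ⁅C, C⁆ ≤ C := sup_le hSC C.commutator_le_self
  have factorization : normalizer (S : Set G) ⊓ C ⊔ ((S : Subgroup G) ⊔ ⁅C, C⁆) = C :=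
    normalizer_inf_sup_eq_of_sylow_le S le_sup_left hKC
  constructor
  · have : (⁅C, C⁆.subgroupOf C).Normal := normal_subgroupOf_of_commutator_le le_rfl
    rw [← Sylow.coe_coe, coe_mul_eq_coe_sup_of_normal_subgroupOf hSC C.commutator_le_self,
      coe_mul_eq_coe_sup_of_normal_subgroupOf inf_le_right hKC, Sylow.coe_coe, factorization]
  · exact ⟨quotientEquivOfSupEq factorization subgroupOf_inf_eq_inf_subgroupOf_inf⟩

theorem stmt18 {G : Type*} [Group G] [Fintype G] (p : ℕ) [Fact p.Prime]
    (hdvd : p ∣ Fintype.card G) (S : Sylow p G)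
    (hcen : omega1 p (S : Subgroup G) ≤
      (S : Subgroup G) ⊓ Subgroup.centralizer ((S : Subgroup G) : Set G))
    (hfus : ControlsPFusion (S : Subgroup G) (Subgroup.normalizer ((S : Subgroup G) : Set G)))
    (Q : Subgroup G) (hQ : Q ≠ ⊥) (hQle : Q ≤ omega1 p (S : Subgroup G)) :
    (((Subgroup.normalizer ((S : Subgroup G) : Set G) ⊓ Subgroup.centralizer (Q : Set G) : Subgroup G) : Set G) *
        (((S : Subgroup G) : Set G) *
          ((⁅Subgroup.centralizer (Q : Set G), Subgroup.centralizer (Q : Set G)⁆ :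
            Subgroup G) : Set G)) =
        (Subgroup.centralizer (Q : Set G) : Set G)) ∧
      Nonempty
        ((Subgroup.centralizer (Q : Set G) ⧸
          (((S : Subgroup G) ⊔
            ⁅Subgroup.centralizer (Q : Set G), Subgroup.centralizer (Q : Set G)⁆).subgroupOf
              (Subgroup.centralizer (Q : Set G)))) ≃*
        ((Subgroup.normalizer ((S : Subgroup G) : Set G) ⊓ Subgroup.centralizer (Q : Set G) : Subgroup G) ⧸
          ((Subgroup.normalizer ((S : Subgroup G) : Set G) ⊓ ((S : Subgroup G) ⊔
            ⁅Subgroup.centralizer (Q : Set G), Subgroup.centralizer (Q : Set G)⁆)).subgroupOf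
              (Subgroup.normalizer ((S : Subgroup G) : Set G) ⊓ Subgroup.centralizer (Q : Set G))))) :=
  stmt18_general S _ (le_centralizer_iff.mp ((hQle.trans hcen).trans inf_le_right))
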